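/- arXiv:2408.13911 — 2 statements merged into one kernel-verified Lean document; each statement's English description precedes it below -/
import Mathlib

section
/- Let L be a frame, r_1 < r_2 < ⋯ < r_n rationals, and a_1, …, a_n pairwise disjoint complemented elements of L with a_1 ⊔ ⋯ ⊔ a_n = ⊤. Let f := Σ_{i=1}^{n} r_i·χ_{a_i} (iterated sum of scaled characteristic pairs), with components u_f, v_f. Then for all p, q ∈ ℚ: u_f p = ⊤ if p < r_1; u_f p = a_{j+1} ⊔ ⋯ ⊔ a_n if r_j ≤ p < r_{j+1} (for 1 ≤ j ≤ n−1); u_f p = ⊥ if p ≥ r_n; and v_f q = ⊥ if q ≤ r_1; v_f q = a_1 ⊔ ⋯ ⊔ a_j if r_j < q ≤ r_{j+1} (for 1 ≤ j ≤ n−1); v_f q = ⊤ if q > r_n. -/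
/-- A pair of maps `u, v : ℚ → L`, encoding a real-valued function on the frame `L`
via `f(p,—) = u p`, `f(—,q) = v q`. -/
structure MP (L : Type*) where
  u : ℚ → L
  v : ℚ → L

namespace MP

variable {L : Type*} [Order.Frame L]

/-- The order on pairs: `f ≤ g` iff `u_f p ≤ u_g p` and `v_g q ≤ v_f q` for all rationals. -/
def le (f g : MP L) : Prop :=
  (∀ p : ℚ, f.u p ≤ g.u p) ∧ (∀ q : ℚ, g.v q ≤ f.v q)

/-- The sum of two pairs. -/
noncomputable def add (f g : MP L) : MP L where
  u := fun p => ⨆ t : ℚ, f.u t ⊓ g.u (p - t)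
  v := fun q => ⨆ t : ℚ, f.v t ⊓ g.v (q - t)

/-- The join of two pairs. -/
def sup (f g : MP L) : MP L where
  u := fun p => f.u p ⊔ g.u p
  v := fun q => f.v q ⊓ g.v q

/-- The negation of a pair. -/
def neg (f : MP L) : MP L where
  u := fun p => f.v (-p)
  v := fun q => f.u (-q)

end MP

/-- The zero pair `𝟎`. -/
noncomputable def zeroMP (L : Type*) [Order.Frame L] : MP L where
  u := fun p => if p < 0 then ⊤ else ⊥
  v := fun q => if q ≤ 0 then ⊥ else ⊤

/-- The scaled characteristic pair `r·χ_a`, for a rational `r` and a complemented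
element `a` with complement `ac`. -/
noncomputable def sChi {L : Type*} [Order.Frame L] (r : ℚ) (a ac : L) : MP L where
  u := fun p =>
    if 0 < r then (if p < 0 then ⊤ else if p < r then a else ⊥)
    else if r = 0 then (if p < 0 then ⊤ else ⊥)
    else (if p < r then ⊤ else if p < 0 then ac else ⊥)
  v := fun q =>
    if 0 < r then (if q ≤ 0 then ⊥ else if q ≤ r then ac else ⊤)
    else if r = 0 then (if q ≤ 0 then ⊥ else ⊤)
    else (if q ≤ r then ⊥ else if q ≤ 0 then a else ⊤)

/-- Iterated sum of a finite list of pairs. -/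
noncomputable def sumMP {L : Type*} [Order.Frame L] : List (MP L) → MP L
  | [] => zeroMP L
  | [f] => f
  | f :: g :: fs => f.add (sumMP (g :: fs))

/-!
Cut the frame along the `a i`. On the piece `a k` the pair `r i · χ_{a i}` is the constant `r k`
if `i = k` and the constant `0` otherwise, and constants add, so the sum is the constant `r k`
there. Since the pieces cover `⊤`, distributivity rebuilds `u p` and `v q` from their traces on the
pieces, and these are `a k` or `⊥` according to the position of `p` or `q` relative to `r k`.
-/

theorem eq_iSup_of_forall_le_or_disjoint {L ι : Type*} [Order.Frame L] {a : ι → L} {w : L}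
    {P : ι → Prop} (hcov : (⨆ i, a i) = ⊤) (hle : ∀ i, P i → a i ≤ w)
    (hdisj : ∀ i, ¬ P i → Disjoint (a i) w) : w = ⨆ i, ⨆ _ : P i, a i := by
  refine le_antisymm ?_ (iSup₂_le hle)
  calc
    w = ⨆ i, a i ⊓ w := by rw [← iSup_inf_eq, hcov, top_inf_eq]
    _ ≤ ⨆ i, ⨆ _ : P i, a i := iSup_le fun i => by
      by_cases hi : P i
      · exact inf_le_left.trans (le_iSup₂_of_le i hi le_rfl)
      · exact (hdisj i hi).le_bot.trans bot_le

/-- The restriction of the pair `f` to the part `c` of the frame is the constant `x`. It is encoded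
by comparing `c` with the values of `f`, so that no passage to the frame of elements below `c` is
needed. -/
structure MP.HasValueOn {L : Type*} [Order.Frame L] (f : MP L) (c : L) (x : ℚ) : Prop where
  le_u : ∀ p < x, c ≤ f.u p
  disjoint_u : ∀ p, x ≤ p → Disjoint c (f.u p)
  le_v : ∀ q, x < q → c ≤ f.v q
  disjoint_v : ∀ q ≤ x, Disjoint c (f.v q)

section HasValueOn

variable {L : Type*} [Order.Frame L] {c a ac : L}

theorem MP.HasValueOn.add {f g : MP L} {x y : ℚ} (hf : f.HasValueOn c x)
    (hg : g.HasValueOn c y) : (f.add g).HasValueOn c (x + y) where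
  le_u p hp := by
    obtain ⟨t, hyt, htx⟩ : ∃ t, p - y < t ∧ t < x := exists_between (by linarith)
    exact le_iSup_of_le t (le_inf (hf.le_u t htx) (hg.le_u (p - t) (by linarith)))
  disjoint_u p hp := disjoint_iSup_iff.2 fun t => by
    rcases le_or_gt x t with hxt | htx
    · exact (hf.disjoint_u t hxt).mono_right inf_le_left
    · exact (hg.disjoint_u (p - t) (by linarith)).mono_right inf_le_right
  le_v q hq := by
    obtain ⟨t, hxt, hty⟩ : ∃ t, x < t ∧ t < q - y := exists_between (by linarith)
    exact le_iSup_of_le t (le_inf (hf.le_v t hxt) (hg.le_v (q - t) (by linarith)))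
  disjoint_v q hq := disjoint_iSup_iff.2 fun t => by
    rcases le_or_gt t x with htx | hxt
    · exact (hf.disjoint_v t htx).mono_right inf_le_left
    · exact (hg.disjoint_v (q - t) (by linarith)).mono_right inf_le_right

theorem hasValueOn_zeroMP (c : L) : (zeroMP L).HasValueOn c 0 where
  le_u p hp := by simp [zeroMP, hp]
  disjoint_u p hp := by simp [zeroMP, hp.not_gt]
  le_v q hq := by simp [zeroMP, hq.not_ge]
  disjoint_v q hq := by simp [zeroMP, hq]

theorem hasValueOn_sumMP_map {ι : Type*} {F : ι → MP L} {x : ι → ℚ}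
    (h : ∀ i, (F i).HasValueOn c (x i)) :
    ∀ l : List ι, (sumMP (l.map F)).HasValueOn c (l.map x).sum
  | [] => hasValueOn_zeroMP c
  | [i] => by simpa [sumMP] using h i
  | i :: j :: l => by
    simpa [sumMP] using (h i).add (hasValueOn_sumMP_map h (j :: l))

theorem hasValueOn_sChi_self (r : ℚ) (h : Disjoint a ac) : (sChi r a ac).HasValueOn a r where
  le_u p hp := by simp only [sChi]; grind [le_top]
  disjoint_u p hp := by simp only [sChi]; grind [disjoint_bot_right]
  le_v q hq := by simp only [sChi]; grind [le_top]
  disjoint_v q hq := by simp only [sChi]; grind [disjoint_bot_right]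

theorem hasValueOn_sChi_of_disjoint (r : ℚ) (hac : c ≤ ac) (ha : Disjoint c a) :
    (sChi r a ac).HasValueOn c 0 where
  le_u p hp := by simp only [sChi]; grind [le_top]
  disjoint_u p hp := by simp only [sChi]; grind [disjoint_bot_right]
  le_v q hq := by simp only [sChi]; grind [le_top]
  disjoint_v q hq := by simp only [sChi]; grind [disjoint_bot_right]

theorem hasValueOn_sumMP_sChi {ι : Type*} {r : ι → ℚ} {a ac : ι → L} {l : List ι} {k : ι}
    (ha : ∀ i, IsCompl (a i) (ac i)) (hdisj : ∀ i, i ≠ k → Disjoint (a k) (a i))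
    (hl : l.Nodup) (hk : k ∈ l) :
    (sumMP (l.map fun i => sChi (r i) (a i) (ac i))).HasValueOn (a k) (r k) := by
  classical
  have hterm : ∀ i, (sChi (r i) (a i) (ac i)).HasValueOn (a k) (if i = k then r i else 0) := by
    intro i
    split_ifs with hik
    · exact hik ▸ hasValueOn_sChi_self (r i) (ha i).disjoint
    · exact hasValueOn_sChi_of_disjoint (r i) ((ha i).le_right_iff.2 (hdisj i hik)) (hdisj i hik)
  have hsum : (l.map fun i => if i = k then r i else 0).sum = r k := by
    rw [List.sum_map_eq_nsmul_single k _ fun i hik _ => if_neg hik,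
      List.count_eq_one_of_mem hl hk, one_nsmul, if_pos rfl]
  exact hsum ▸ hasValueOn_sumMP_map hterm l

end HasValueOn

section StepMP

variable {L ι : Type*} [CompleteLattice L] {r : ι → ℚ} {a : ι → L} {p q : ℚ} {j k : ι}

/-- The pair of the step function that takes the value `r i` on `a i`. The `r i` may come in any
order and with repetitions. -/
def stepMP (r : ι → ℚ) (a : ι → L) : MP L where
  u p := ⨆ i, ⨆ _ : p < r i, a i
  v q := ⨆ i, ⨆ _ : r i < q, a i

theorem stepMP_u_eq_top (hcov : (⨆ i, a i) = ⊤) (hp : ∀ i, p < r i) :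
    (stepMP r a).u p = ⊤ := by
  simp [stepMP, hp, hcov]

theorem stepMP_u_eq_bot (hp : ∀ i, r i ≤ p) : (stepMP r a).u p = ⊥ := by
  simp [stepMP, fun i => (hp i).not_gt]

theorem stepMP_v_eq_top (hcov : (⨆ i, a i) = ⊤) (hq : ∀ i, r i < q) :
    (stepMP r a).v q = ⊤ := by
  simp [stepMP, hq, hcov]

theorem stepMP_v_eq_bot (hq : ∀ i, q ≤ r i) : (stepMP r a).v q = ⊥ := by
  simp [stepMP, fun i => (hq i).not_gt]

variable [LinearOrder ι]

theorem stepMP_u_of_covBy (hr : Monotone r) (hjk : j ⋖ k) (hj : r j ≤ p) (hk : p < r k) :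
    (stepMP r a).u p = ⨆ i, ⨆ _ : j < i, a i := by
  have hiff : ∀ i, p < r i ↔ j < i := fun i =>
    ⟨fun hi => hr.reflect_lt (hj.trans_lt hi), fun hi => hk.trans_le (hr (hjk.ge_of_gt hi))⟩
  simp only [stepMP, hiff]

theorem stepMP_v_of_covBy (hr : Monotone r) (hjk : j ⋖ k) (hj : r j < q) (hk : q ≤ r k) :
    (stepMP r a).v q = ⨆ i, ⨆ _ : i ≤ j, a i := by
  have hiff : ∀ i, r i < q ↔ i ≤ j := fun i =>
    ⟨fun hi => hjk.le_of_lt (hr.reflect_lt (hi.trans_le hk)), fun hi => (hr hi).trans_lt hj⟩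
  simp only [stepMP, hiff]

end StepMP

theorem MP.eq_stepMP_of_forall_hasValueOn {L ι : Type*} [Order.Frame L] {f : MP L} {r : ι → ℚ}
    {a : ι → L} (hcov : (⨆ i, a i) = ⊤) (h : ∀ i, f.HasValueOn (a i) (r i)) :
    f = stepMP r a := by
  have hu : f.u = (stepMP r a).u := funext fun p => eq_iSup_of_forall_le_or_disjoint hcov
    (fun i hi => (h i).le_u p hi) fun i hi => (h i).disjoint_u p (not_lt.1 hi)
  have hv : f.v = (stepMP r a).v := funext fun q => eq_iSup_of_forall_le_or_disjoint hcov
    (fun i hi => (h i).le_v q hi) fun i hi => (h i).disjoint_v q (not_lt.1 hi)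
  exact congrArg₂ MP.mk hu hv

theorem canonical_form_values_general {L ι : Type*} [Order.Frame L] {l : List ι} (hl : l.Nodup)
    (hmem : ∀ i, i ∈ l) (r : ι → ℚ) {a ac : ι → L} (ha : ∀ i, IsCompl (a i) (ac i))
    (hdisj : ∀ i j, i ≠ j → a i ⊓ a j = ⊥) (hcov : (⨆ i, a i) = ⊤) :
    sumMP (l.map fun i => sChi (r i) (a i) (ac i)) = stepMP r a :=
  MP.eq_stepMP_of_forall_hasValueOn hcov fun k =>
    hasValueOn_sumMP_sChi ha (fun i hik => disjoint_iff.2 (hdisj k i hik.symm)) hl (hmem k)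

/-- The values of a simple function in canonical form: for
`f = Σ_{i=1}^{n} r_i·χ_{a_i}` with `r_1 < ⋯ < r_n` and pairwise disjoint complemented
`a_i` joining to `⊤`, the components `u_f` and `v_f` are given by the canonical
step formulas. -/
theorem canonical_form_values {L : Type*} [Order.Frame L]
    (n : ℕ) (hn : 0 < n) (r : Fin n → ℚ) (hr : StrictMono r)
    (a ac : Fin n → L) (ha : ∀ i, IsCompl (a i) (ac i))
    (hdisj : ∀ i j, i ≠ j → a i ⊓ a j = ⊥) (hcov : (⨆ i, a i) = ⊤)
    (f : MP L) (hf : f = sumMP (List.ofFn fun i => sChi (r i) (a i) (ac i))) :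
    (∀ p : ℚ, p < r ⟨0, hn⟩ → f.u p = ⊤) ∧
    (∀ (p : ℚ) (j : Fin n) (hj : (j : ℕ) + 1 < n),
      r j ≤ p → p < r ⟨(j : ℕ) + 1, hj⟩ → f.u p = ⨆ i, ⨆ _ : j < i, a i) ∧
    (∀ p : ℚ, r ⟨n - 1, by omega⟩ ≤ p → f.u p = ⊥) ∧
    (∀ q : ℚ, q ≤ r ⟨0, hn⟩ → f.v q = ⊥) ∧
    (∀ (q : ℚ) (j : Fin n) (hj : (j : ℕ) + 1 < n),
      r j < q → q ≤ r ⟨(j : ℕ) + 1, hj⟩ → f.v q = ⨆ i, ⨆ _ : i ≤ j, a i) ∧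
    (∀ q : ℚ, r ⟨n - 1, by omega⟩ < q → f.v q = ⊤) := by
  rw [hf, List.ofFn_eq_map,
    canonical_form_values_general (List.nodup_finRange n) List.mem_finRange r ha hdisj hcov]
  have hfirst (i : Fin n) : r ⟨0, hn⟩ ≤ r i := hr.monotone (Nat.zero_le i)
  have hlast (i : Fin n) : r i ≤ r ⟨n - 1, by omega⟩ := hr.monotone (Nat.le_sub_one_of_lt i.isLt)
  have hcovBy (j : Fin n) (hj : (j : ℕ) + 1 < n) : j ⋖ ⟨j + 1, hj⟩ := by simp
  exact ⟨fun p hp => stepMP_u_eq_top hcov fun i => hp.trans_le (hfirst i),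
    fun p j hj => stepMP_u_of_covBy hr.monotone (hcovBy j hj),
    fun p hp => stepMP_u_eq_bot fun i => (hlast i).trans hp,
    fun q hq => stepMP_v_eq_bot fun i => hq.trans (hfirst i),
    fun q j hj => stepMP_v_of_covBy hr.monotone (hcovBy j hj),
    fun q hq => stepMP_v_eq_top hcov fun i => (hlast i).trans_lt hq⟩
end

section
/- Let L be a frame, r_1 < ⋯ < r_n rationals, and a_1, …, a_n pairwise disjoint complemented elements of L. Let g := Σ_{i=1}^{n} r_i·χ_{a_i} with components (u_g, v_g). Let b be a complemented element of L with bᶜ ⊓ v_g 0 = ⊥. Then a_i ≤ b for every i with r_i < 0. (This is the lattice content of the fact that if θ_Sᶜ ∧ g(—,0) = 0 for a complemented σ-sublocale S, then the integral of g over S is nonnegative: each σ-sublocale carrying a negative coefficient lies inside Sᶜ, so it contributes measure zero.) -/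
/-! On `a i`, each summand `r j · χ_(a j)` with `j ≠ i` is at most `0`: either its coefficient is
nonpositive, or `a i` lies in the complement of `a j`. Hence the sum is at most `r i` on `a i`, and
when `r i < 0` this gives `a i ≤ v_g 0`. So `bᶜ` misses `a i`, that is, `a i ≤ b`. -/

namespace MP

/-- The bound `f ≤ x` on the part `c` of the frame, used to estimate sums of pairs on `c` term by
term. Since `f.v q` stands for the strict inequality `f < q`, it is tested at all `q > x` only. -/
def LeOn {L : Type*} [LE L] (f : MP L) (c : L) (x : ℚ) : Prop :=
  ∀ q, x < q → c ≤ f.v q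

theorem LeOn.anti {L : Type*} [Preorder L] {f : MP L} {c d : L} {x : ℚ}
    (hf : f.LeOn d x) (hcd : c ≤ d) : f.LeOn c x :=
  fun q hq => hcd.trans (hf q hq)

variable {L : Type*} [Order.Frame L]

theorem LeOn.add {f g : MP L} {c : L} {x y : ℚ} (hf : f.LeOn c x) (hg : g.LeOn c y) :
    (f.add g).LeOn c (x + y) := by
  intro q hq
  obtain ⟨t, hxt, htq⟩ := exists_between (lt_sub_iff_add_lt.mpr hq)
  exact le_iSup_of_le t (le_inf (hf t hxt) (hg (q - t) (lt_sub_comm.mp htq)))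

theorem leOn_zeroMP (c : L) : (zeroMP L).LeOn c 0 := by
  intro q hq
  simp [zeroMP, hq.not_ge]

theorem leOn_sumMP_map {ι : Type*} {f : ι → MP L} {c : L} {x : ι → ℚ} :
    ∀ l : List ι, (∀ i ∈ l, (f i).LeOn c (x i)) → (sumMP (l.map f)).LeOn c (l.map x).sum
  | [], _ => leOn_zeroMP c
  | [i], h => by simpa [sumMP] using h i
  | i :: j :: l, h =>
    (h i List.mem_cons_self).add
      (leOn_sumMP_map (j :: l) fun k hk => h k (List.mem_cons_of_mem i hk))

theorem leOn_sumMP_ofFn {n : ℕ} {f : Fin n → MP L} {c : L} {x : Fin n → ℚ}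
    (h : ∀ i, (f i).LeOn c (x i)) : (sumMP (List.ofFn f)).LeOn c (∑ i, x i) := by
  rw [List.ofFn_eq_map, Fin.sum_univ_def]
  exact leOn_sumMP_map _ fun i _ => h i

theorem leOn_sChi_self (r : ℚ) (a ac : L) : (sChi r a ac).LeOn a r := by
  intro q hq
  obtain hr | rfl | hr := lt_trichotomy r 0
  · simp only [sChi, hr.not_gt, hr.ne, hq.not_ge, if_false]
    split_ifs
    exacts [le_rfl, le_top]
  · simp [sChi, hq.not_ge]
  · simp [sChi, hr, hq.not_ge, (hr.trans hq).not_ge]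

theorem leOn_sChi_of_nonpos {r : ℚ} (hr : r ≤ 0) (a ac c : L) : (sChi r a ac).LeOn c 0 := by
  intro q hq
  simp [sChi, hr.not_gt, hq.not_ge, (hr.trans_lt hq).not_ge]

theorem leOn_sChi_compl (r : ℚ) (a ac : L) : (sChi r a ac).LeOn ac 0 := by
  obtain hr | hr := le_or_gt r 0
  · exact leOn_sChi_of_nonpos hr a ac ac
  · intro q hq
    simp only [sChi, hr, hq.not_ge, if_true, if_false]
    split_ifs
    exacts [le_rfl, le_top]

theorem leOn_sumMP_sChi {n : ℕ} {r : Fin n → ℚ} {a ac : Fin n → L} {i : Fin n}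
    (h : ∀ j, j ≠ i → 0 < r j → a i ≤ ac j) :
    (sumMP (List.ofFn fun j => sChi (r j) (a j) (ac j))).LeOn (a i) (r i) := by
  have hsummand (j : Fin n) :
      (sChi (r j) (a j) (ac j)).LeOn (a i) ((Pi.single i (r i) : Fin n → ℚ) j) := by
    obtain rfl | hji := eq_or_ne j i
    · simpa using leOn_sChi_self (r j) (a j) (ac j)
    rw [Pi.single_eq_of_ne hji]
    obtain hr | hr := le_or_gt (r j) 0
    · exact leOn_sChi_of_nonpos hr _ _ _
    · exact (leOn_sChi_compl _ _ _).anti (h j hji hr)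
  simpa using leOn_sumMP_ofFn hsummand

end MP

theorem neg_coeff_le_of_compl_inf_bot_general {L : Type*} [Order.Frame L] {n : ℕ} {r : Fin n → ℚ}
    {a ac : Fin n → L} (ha : ∀ j, IsCompl (a j) (ac j)) {b bc : L} (hb : IsCompl b bc)
    (hbv : Disjoint bc ((sumMP (List.ofFn fun j => sChi (r j) (a j) (ac j))).v 0))
    {i : Fin n} (hi : r i < 0) (hdisj : ∀ j, 0 < r j → Disjoint (a i) (a j)) : a i ≤ b := by
  have hle : a i ≤ (sumMP (List.ofFn fun j => sChi (r j) (a j) (ac j))).v 0 :=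
    MP.leOn_sumMP_sChi (fun j _ hj => (ha j).le_right_iff.mpr (hdisj j hj)) 0 hi
  exact hb.le_left_iff.mpr (hbv.symm.mono_left hle)

/-- If `g = Σ_{i=1}^{n} r_i·χ_{a_i}` with pairwise disjoint complemented `a_i`, and `b`
is a complemented element with `bᶜ ⊓ v_g 0 = ⊥`, then `a_i ≤ b` whenever `r_i < 0`. -/
theorem neg_coeff_le_of_compl_inf_bot {L : Type*} [Order.Frame L]
    (n : ℕ) (r : Fin n → ℚ)
    (a ac : Fin n → L) (ha : ∀ i, IsCompl (a i) (ac i))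
    (hdisj : ∀ i j, i ≠ j → a i ⊓ a j = ⊥)
    (g : MP L) (hg : g = sumMP (List.ofFn fun i => sChi (r i) (a i) (ac i)))
    (b bc : L) (hb : IsCompl b bc) (hbv : bc ⊓ g.v 0 = ⊥) :
    ∀ i, r i < 0 → a i ≤ b := by
  subst hg
  exact fun i hi => neg_coeff_le_of_compl_inf_bot_general ha hb (disjoint_iff.mpr hbv) hi
    fun j hj => disjoint_iff.mpr (hdisj i j (ne_of_apply_ne r (hi.trans hj).ne))
end
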